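/- Let m ≥ 0 and let ε₁ ≠ 0, ε₂ ≠ 0 be real. Consider the real cubic hypersurface X₀ ⊂ P^{6+m} of dimension 5 + m defined in homogeneous coordinates (y₀,…,y_{3+m}, u, v, w) by w·(Σ_{i=0}^{3+m} y_i² − u² − v²) − ε₂·(y₀³ + ε₁(u³ + v³)) = 0, which has a node at the point p = [0:⋯:0:0:0:1]. Then X₀ contains no real 2-plane passing through p: there is no 3-dimensional real linear subspace of ℝ^{7+m} containing the vector (0,…,0,0,0,1) on which the above cubic form vanishes identically. -/

import Mathlib

/-- The cubic form `G(y,u,v,w) = w·(Σ_{i=0}^{3+m} yᵢ² − u² − v²) − ε₂·(y₀³ + ε₁(u³+v³))`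
on `ℝ^{7+m} = ℝ^{4+m} × ℝ × ℝ × ℝ`, whose points are written `z = (y, (u, (v, w)))`. -/
def nodalCubicG (m : ℕ) (ε₁ ε₂ : ℝ) (z : (Fin (m + 4) → ℝ) × ℝ × ℝ × ℝ) : ℝ :=
  z.2.2.2 * ((∑ i : Fin (m + 4), z.1 i ^ 2) - z.2.1 ^ 2 - z.2.2.1 ^ 2) -
    ε₂ * (z.1 0 ^ 3 + ε₁ * (z.2.1 ^ 3 + z.2.2.1 ^ 3))

/-!
Write `q = Σ yᵢ² − u² − v²` and `c = y₀³ + ε₁(u³ + v³)`. If the form `w·q − ε₂·c` vanishes on a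
subspace `V` through the node, then `w` can be shifted freely inside `V`, so `q` and `c`
vanish separately on `V`. The form `q` is anisotropic in `y`, so `V` meets
`u = v = w = 0` trivially and, being 3-dimensional, is the graph of a linear map `(u, v, w) ↦ y`.
Restricting `c = 0` to this graph makes `−ε₁(u³ + v³)` the cube of a linear form in `u, v`. That
form vanishes at `(1, −1)`, hence is `a(u + v)`, and `a³(u + v)³ = −ε₁(u³ + v³)` at `(1, 0)` and
`(1, 1)` gives `6ε₁ = 0`.
-/

theorem exists_linearMap_forall_mk_mem_of_finrank_eq {K E F : Type*} [DivisionRing K]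
    [AddCommGroup E] [Module K E] [AddCommGroup F] [Module K F] [FiniteDimensional K F]
    {V : Submodule K (E × F)} (hdim : Module.finrank K V = Module.finrank K F)
    (hV : ∀ y : E, (y, (0 : F)) ∈ V → y = 0) :
    ∃ s : F →ₗ[K] E, ∀ t, (s t, t) ∈ V := by
  let π : V →ₗ[K] F := LinearMap.snd K E F ∘ₗ V.subtype
  have hπ : Function.Injective π := by
    rw [injective_iff_map_eq_zero]
    rintro ⟨⟨y, t⟩, hz⟩ (rfl : t = 0)
    exact Subtype.ext (Prod.ext (hV y hz) rfl)
  have : FiniteDimensional K V := Module.Finite.of_injective π hπ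
  let e : V ≃ₗ[K] F := π.linearEquivOfInjective hπ hdim
  refine ⟨LinearMap.fst K E F ∘ₗ V.subtype ∘ₗ e.symm.toLinearMap, fun t ↦ ?_⟩
  have ht : (e.symm t : E × F).2 = t := e.apply_symm_apply t
  have hmem : ((e.symm t : E × F).1, (e.symm t : E × F).2) ∈ V := (e.symm t).2
  rwa [ht] at hmem

theorem eq_zero_of_forall_dual_pow_three_eq {K : Type*} [Field K] (h6 : (6 : K) ≠ 0)
    (f : Module.Dual K (K × K)) {ε : K} (hf : ∀ u v, f (u, v) ^ 3 = ε * (u ^ 3 + v ^ 3)) :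
    ε = 0 := by
  have h_antidiag : f (1, -1) = 0 := pow_eq_zero_iff three_ne_zero |>.mp (by rw [hf]; ring)
  have h_diag : f (1, 1) = 2 * f (1, 0) := by
    have h : ((1, 1) : K × K) = (2 : K) • (1, 0) - (1, -1) := by ext <;> norm_num
    rw [h, map_sub, map_smul, h_antidiag, sub_zero, smul_eq_mul]
  have h_cube : (2 * f (1, 0)) ^ 3 = ε * (1 ^ 3 + 1 ^ 3) := h_diag ▸ hf 1 1
  have h_six : 6 * ε = 0 := by linear_combination h_cube - 8 * hf 1 0
  exact (mul_eq_zero.mp h_six).resolve_left h6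

theorem anisotropic_weightedSumSquares {ι R : Type*} [Fintype ι] [CommRing R] [LinearOrder R]
    [IsStrictOrderedRing R] {w : ι → R} (hw : ∀ i, 0 < w i) :
    (QuadraticMap.weightedSumSquares R w).Anisotropic := by
  intro y hy
  rw [QuadraticMap.weightedSumSquares_apply, Finset.sum_eq_zero_iff_of_nonneg
    fun i _ ↦ smul_nonneg (hw i).le (mul_self_nonneg (y i))] at hy
  funext i
  exact mul_self_eq_zero.mp ((smul_eq_zero.mp (hy i (Finset.mem_univ i))).resolve_left (hw i).ne')

section NodalCubic

variable {K E : Type*} [Field K] [AddCommGroup E] [Module K E]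

/-- The cubic form `w·(Q(y) − u² − v²) − ε₂·(ℓ(y)³ + ε₁(u³ + v³))` at `z = (y, (u, (v, w)))`: the
generalization of `nodalCubicG` in which a quadratic form `Q` replaces `Σ yᵢ²` and a linear form `ℓ`
replaces the coordinate `y₀`. -/
def nodalCubicForm (Q : QuadraticForm K E) (ℓ : Module.Dual K E) (ε₁ ε₂ : K)
    (z : E × K × K × K) : K :=
  z.2.2.2 * (Q z.1 - z.2.1 ^ 2 - z.2.2.1 ^ 2) -
    ε₂ * (ℓ z.1 ^ 3 + ε₁ * (z.2.1 ^ 3 + z.2.2.1 ^ 3))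

theorem nodalCubicG_eq_nodalCubicForm (m : ℕ) (ε₁ ε₂ : ℝ) :
    nodalCubicG m ε₁ ε₂ = nodalCubicForm
      (QuadraticMap.weightedSumSquares ℝ (1 : Fin (m + 4) → ℝ)) (LinearMap.proj 0) ε₁ ε₂ := by
  funext z
  simp [nodalCubicG, nodalCubicForm, QuadraticMap.weightedSumSquares_apply, sq]

variable {Q : QuadraticForm K E} {ℓ : Module.Dual K E} {ε₁ ε₂ : K}
  {V : Submodule K (E × K × K × K)}

theorem quadraticPart_eq_zero_of_mem (hp : (0, 0, 0, 1) ∈ V)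
    (hV : ∀ z ∈ V, nodalCubicForm Q ℓ ε₁ ε₂ z = 0) {y : E} {u v w : K} (hz : (y, u, v, w) ∈ V) :
    Q y - u ^ 2 - v ^ 2 = 0 := by
  have h₀ := hV _ hz
  have h₁ := hV _ (V.add_mem hz hp)
  simp only [nodalCubicForm, Prod.mk_add_mk, add_zero] at h₀ h₁
  linear_combination h₁ - h₀

theorem cubicPart_eq_zero_of_mem (hε₂ : ε₂ ≠ 0) (hp : (0, 0, 0, 1) ∈ V)
    (hV : ∀ z ∈ V, nodalCubicForm Q ℓ ε₁ ε₂ z = 0) {y : E} {u v w : K} (hz : (y, u, v, w) ∈ V) :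
    ℓ y ^ 3 + ε₁ * (u ^ 3 + v ^ 3) = 0 := by
  have h := hV _ hz
  simp only [nodalCubicForm, quadraticPart_eq_zero_of_mem hp hV hz, mul_zero, zero_sub,
    neg_eq_zero] at h
  exact (mul_eq_zero.mp h).resolve_left hε₂

theorem exists_linearMap_forall_mk_mem_of_nodalCubicForm_eq_zero (hQ : Q.Anisotropic)
    (hdim : Module.finrank K V = 3) (hp : (0, 0, 0, 1) ∈ V)
    (hV : ∀ z ∈ V, nodalCubicForm Q ℓ ε₁ ε₂ z = 0) :
    ∃ s : K × K × K →ₗ[K] E, ∀ t, (s t, t) ∈ V := by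
  refine exists_linearMap_forall_mk_mem_of_finrank_eq (by simp [hdim]) fun y hy ↦ hQ y ?_
  simpa using quadraticPart_eq_zero_of_mem hp hV hy

theorem cubic_no_real_planes_through_node_general (h6 : (6 : K) ≠ 0) (hQ : Q.Anisotropic)
    (ℓ : Module.Dual K E) (hε₁ : ε₁ ≠ 0) (hε₂ : ε₂ ≠ 0) :
    ¬ ∃ V : Submodule K (E × K × K × K), Module.finrank K V = 3 ∧ (0, 0, 0, 1) ∈ V ∧
        ∀ z ∈ V, nodalCubicForm Q ℓ ε₁ ε₂ z = 0 := by
  rintro ⟨V, hdim, hp, hV⟩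
  obtain ⟨s, hs⟩ := exists_linearMap_forall_mk_mem_of_nodalCubicForm_eq_zero hQ hdim hp hV
  let f : Module.Dual K (K × K) :=
    ℓ ∘ₗ s ∘ₗ LinearMap.prodMap LinearMap.id (LinearMap.inl K K K)
  have hf : ∀ u v, f (u, v) ^ 3 = -ε₁ * (u ^ 3 + v ^ 3) := fun u v ↦ by
    rw [neg_mul]
    exact eq_neg_of_add_eq_zero_left (cubicPart_eq_zero_of_mem hε₂ hp hV (hs (u, v, 0)))
  exact hε₁ (neg_eq_zero.mp (eq_zero_of_forall_dual_pow_three_eq h6 f hf))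

end NodalCubic

/-- (Finashin–Kharlamov, concluding remarks, cubic example.)  For real `ε₁ ≠ 0`,
`ε₂ ≠ 0`, the real cubic hypersurface of dimension `5+m` defined in `P^{6+m}` by
`w·(Σ yᵢ² − u² − v²) − ε₂·(y₀³ + ε₁(u³ + v³)) = 0`, which has a node at
`p = [0:⋯:0:1]`, contains no real 2-plane through `p`: there is no 3-dimensional
subspace `V ⊆ ℝ^{7+m}` containing the vector `(0,0,0,1)` on which the cubic form
vanishes identically. -/
theorem cubic_no_real_planes_through_node (m : ℕ) (ε₁ ε₂ : ℝ)
    (hε₁ : ε₁ ≠ 0) (hε₂ : ε₂ ≠ 0) :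
    ¬ ∃ V : Submodule ℝ ((Fin (m + 4) → ℝ) × ℝ × ℝ × ℝ), Module.finrank ℝ V = 3 ∧
        ((0, 0, 0, 1) : (Fin (m + 4) → ℝ) × ℝ × ℝ × ℝ) ∈ V ∧
        ∀ z ∈ V, nodalCubicG m ε₁ ε₂ z = 0 := by
  rw [nodalCubicG_eq_nodalCubicForm]
  exact cubic_no_real_planes_through_node_general (by norm_num)
    (anisotropic_weightedSumSquares fun _ ↦ one_pos) _ hε₁ hε₂
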